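/- For every integer n ≥ 2, the inequality (3n³ − 13n² + 18n − 8)·M_1(n) + (12n² − 120n + 212)·M_2(n) − 960·M_3(n) ≥ 0 holds, with equality if and only if n is prime. -/

import Mathlib

/-- The generalized MacMahon partition function `M_a(n)`: the sum of
`m_1 ⋯ m_a` over all tuples of positive integers `0 < s_1 < ⋯ < s_a` and
`m_1, …, m_a > 0` with `n = m_1 s_1 + ⋯ + m_a s_a`.  (All such solutions
satisfy `m_i, s_i ∈ [1, n]`, so the finite range below captures them all.) -/
def MacMahonM (a n : ℕ) : ℕ :=
  ∑ p ∈ (Fintype.piFinset (fun _ : Fin a => Finset.Icc 1 n) ×ˢ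
          Fintype.piFinset (fun _ : Fin a => Finset.Icc 1 n)).filter
      (fun p => (∀ i j : Fin a, i < j → p.2 i < p.2 j) ∧ ∑ i, p.1 i * p.2 i = n),
    ∏ i, p.1 i

open Finset

def SS (n : ℕ) : Finset (ℕ × ℕ × ℕ × ℕ) :=
  ((Icc 1 n) ×ˢ (Icc 1 n) ×ˢ (Icc 1 n) ×ˢ (Icc 1 n)).filter
    (fun p => p.1 * p.2.2.1 + p.2.1 * p.2.2.2 = n)

lemma mem_SS (n a b x y : ℕ) : (a, b, x, y) ∈ SS n ↔
    0 < a ∧ 0 < b ∧ 0 < x ∧ 0 < y ∧ a * x + b * y = n := by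
  simp only [SS, mem_filter, mem_product, mem_Icc]
  constructor
  · rintro ⟨⟨h1, h2, h3, h4⟩, h5⟩
    exact ⟨h1.1, h2.1, h3.1, h4.1, h5⟩
  · rintro ⟨h1, h2, h3, h4, h5⟩
    have := Nat.le_mul_of_pos_right a h3
    have := Nat.le_mul_of_pos_left x h1
    have := Nat.le_mul_of_pos_right b h4
    have := Nat.le_mul_of_pos_left y h2
    refine ⟨⟨⟨h1, ?_⟩, ⟨h2, ?_⟩, ⟨h3, ?_⟩, ⟨h4, ?_⟩⟩, h5⟩ <;> omega

lemma SS_swap (n : ℕ) (f : ℕ → ℕ → ℕ → ℕ → ℤ) :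
    ∑ p ∈ SS n, f p.1 p.2.1 p.2.2.1 p.2.2.2 = ∑ p ∈ SS n, f p.2.1 p.1 p.2.2.2 p.2.2.1 := by
  refine sum_nbij' (fun p => (p.2.1, p.1, p.2.2.2, p.2.2.1))
    (fun p => (p.2.1, p.1, p.2.2.2, p.2.2.1)) ?_ ?_ ?_ ?_ ?_
  · rintro ⟨a, b, x, y⟩ h
    rw [mem_SS] at *
    grind
  · rintro ⟨a, b, x, y⟩ h
    rw [mem_SS] at *
    grind
  all_goals simp

lemma SS_tri1 (n : ℕ) (f : ℕ → ℕ → ℕ → ℕ → ℤ) :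
    ∑ p ∈ SS n, f p.1 p.2.1 p.2.2.1 p.2.2.2 =
    ∑ p ∈ SS n with p.2.1 < p.1, f p.1 p.2.1 p.2.2.1 p.2.2.2 +
    ∑ p ∈ SS n with p.1 = p.2.1, f p.1 p.2.1 p.2.2.1 p.2.2.2 +
    ∑ p ∈ SS n with p.2.1 < p.1, f p.2.1 p.1 p.2.2.2 p.2.2.1 := by
  have h : ∑ p ∈ SS n with p.2.1 < p.1, f p.2.1 p.1 p.2.2.2 p.2.2.1 =
     ∑ p ∈ SS n with p.1 < p.2.1, f p.1 p.2.1 p.2.2.1 p.2.2.2 := by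
    rw [sum_filter, sum_filter]
    exact (SS_swap n (fun a b x y => if a < b then f a b x y else 0)).symm
  rw [h, sum_filter, sum_filter, sum_filter, ← sum_add_distrib, ← sum_add_distrib]
  refine sum_congr rfl fun p _ => ?_
  grind

lemma SS_tri2 (n : ℕ) (f : ℕ → ℕ → ℕ → ℕ → ℤ) :
    ∑ p ∈ SS n, f p.1 p.2.1 p.2.2.1 p.2.2.2 =
    ∑ p ∈ SS n with p.2.2.1 < p.2.2.2, f p.1 p.2.1 p.2.2.1 p.2.2.2 +
    ∑ p ∈ SS n with p.2.2.1 = p.2.2.2, f p.1 p.2.1 p.2.2.1 p.2.2.2 +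
    ∑ p ∈ SS n with p.2.2.1 < p.2.2.2, f p.2.1 p.1 p.2.2.2 p.2.2.1 := by
  have h : ∑ p ∈ SS n with p.2.2.1 < p.2.2.2, f p.2.1 p.1 p.2.2.2 p.2.2.1 =
     ∑ p ∈ SS n with p.2.2.2 < p.2.2.1, f p.1 p.2.1 p.2.2.1 p.2.2.2 := by
    rw [sum_filter, sum_filter]
    exact (SS_swap n (fun a b x y => if y < x then f a b x y else 0)).symm
  rw [h, sum_filter, sum_filter, sum_filter, ← sum_add_distrib, ← sum_add_distrib]
  refine sum_congr rfl fun p _ => ?_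
  grind

/-- substitution `(a,b,x,y) ↦ (a-b,b,x,x+y)` -/
lemma SS_sub1 (n : ℕ) (f : ℕ → ℕ → ℕ → ℕ → ℤ) :
    ∑ p ∈ SS n with p.2.1 < p.1, f p.1 p.2.1 p.2.2.1 p.2.2.2 =
    ∑ p ∈ SS n with p.2.2.1 < p.2.2.2, f (p.1 + p.2.1) p.2.1 p.2.2.1 (p.2.2.2 - p.2.2.1) := by
  refine sum_nbij' (fun p => (p.1 - p.2.1, p.2.1, p.2.2.1, p.2.2.1 + p.2.2.2))
    (fun p => (p.1 + p.2.1, p.2.1, p.2.2.1, p.2.2.2 - p.2.2.1)) ?_ ?_ ?_ ?_ ?_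
  · rintro ⟨a, b, x, y⟩ h
    simp only [mem_filter, mem_SS] at *
    obtain ⟨⟨h1, h2, h3, h4, h5⟩, h6⟩ := h
    obtain ⟨c, rfl⟩ := Nat.exists_eq_add_of_lt h6
    have : b + c + 1 - b = c + 1 := by omega
    rw [this]
    refine ⟨⟨by omega, by omega, by omega, by omega, by rw [← h5]; ring⟩, by omega⟩
  · rintro ⟨a, b, x, y⟩ h
    simp only [mem_filter, mem_SS] at *
    obtain ⟨⟨h1, h2, h3, h4, h5⟩, h6⟩ := h
    obtain ⟨c, rfl⟩ := Nat.exists_eq_add_of_lt h6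
    have : x + c + 1 - x = c + 1 := by omega
    rw [this]
    refine ⟨⟨by omega, by omega, by omega, by omega, by rw [← h5]; ring⟩, by omega⟩
  · rintro ⟨a, b, x, y⟩ h
    simp only [mem_filter, mem_SS] at *
    ext <;> simp <;> omega
  · rintro ⟨a, b, x, y⟩ h
    simp only [mem_filter, mem_SS] at *
    ext <;> simp <;> omega
  · rintro ⟨a, b, x, y⟩ h
    simp only [mem_filter, mem_SS] at *
    have : a - b + b = a := by omega
    simp [this]

lemma SS_diag1 (n : ℕ) (f : ℕ → ℕ → ℕ → ℕ → ℤ) :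
    ∑ p ∈ SS n with p.1 = p.2.1, f p.1 p.2.1 p.2.2.1 p.2.2.2 =
    ∑ q ∈ n.divisorsAntidiagonal, ∑ l ∈ Ico 1 q.2, f q.1 q.1 l (q.2 - l) := by
  rw [sum_sigma']
  refine sum_nbij' (fun p => ⟨(p.1, p.2.2.1 + p.2.2.2), p.2.2.1⟩)
    (fun s => (s.1.1, s.1.1, s.2, s.1.2 - s.2)) ?_ ?_ ?_ ?_ ?_
  · rintro ⟨a, b, x, y⟩ h
    simp only [mem_filter, mem_SS, mem_sigma, Nat.mem_divisorsAntidiagonal, mem_Ico] at *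
    obtain ⟨⟨h1, h2, h3, h4, h5⟩, rfl⟩ := h
    refine ⟨⟨by rw [← h5]; ring, ?_⟩, by omega, by omega⟩
    have := Nat.mul_pos h1 h3
    omega
  · rintro ⟨⟨d, e⟩, l⟩ h
    simp only [mem_filter, mem_SS, mem_sigma, Nat.mem_divisorsAntidiagonal, mem_Ico] at *
    obtain ⟨⟨h1, h2⟩, h3, h4⟩ := h
    obtain ⟨c, rfl⟩ := Nat.exists_eq_add_of_lt h4
    have : l + c + 1 - l = c + 1 := by omega
    rw [this]
    have : 0 < d := Nat.pos_of_ne_zero (by rintro rfl; simp at h1; omega)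
    refine ⟨⟨by omega, by omega, by omega, by omega, by rw [← h1]; ring⟩, trivial⟩
  · rintro ⟨a, b, x, y⟩ h
    simp only [mem_filter, mem_SS] at *
    ext <;> simp <;> omega
  · rintro ⟨⟨d, e⟩, l⟩ h
    simp only [mem_sigma, Nat.mem_divisorsAntidiagonal, mem_Ico] at *
    have : l + (e - l) = e := by omega
    simp [this]
  · rintro ⟨a, b, x, y⟩ h
    simp only [mem_filter, mem_SS] at *
    simp [h.2]

lemma SS_dual (n : ℕ) (f : ℕ → ℕ → ℕ → ℕ → ℤ) :
    ∑ p ∈ SS n, f p.1 p.2.1 p.2.2.1 p.2.2.2 = ∑ p ∈ SS n, f p.2.2.1 p.2.2.2 p.1 p.2.1 := by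
  refine sum_nbij' (fun p => (p.2.2.1, p.2.2.2, p.1, p.2.1))
    (fun p => (p.2.2.1, p.2.2.2, p.1, p.2.1)) ?_ ?_ ?_ ?_ ?_
  · rintro ⟨a, b, x, y⟩ h
    rw [mem_SS] at *
    grind
  · rintro ⟨a, b, x, y⟩ h
    rw [mem_SS] at *
    grind
  all_goals simp

lemma SS_diag2 (n : ℕ) (f : ℕ → ℕ → ℕ → ℕ → ℤ) :
    ∑ p ∈ SS n with p.2.2.1 = p.2.2.2, f p.1 p.2.1 p.2.2.1 p.2.2.2 =
    ∑ q ∈ n.divisorsAntidiagonal, ∑ l ∈ Ico 1 q.1, f l (q.1 - l) q.2 q.2 := by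
  have h1 : ∑ p ∈ SS n with p.2.2.1 = p.2.2.2, f p.1 p.2.1 p.2.2.1 p.2.2.2 =
      ∑ p ∈ SS n with p.1 = p.2.1, f p.2.2.1 p.2.2.2 p.1 p.2.1 := by
    rw [sum_filter, sum_filter]
    exact SS_dual n (fun a b x y => if x = y then f a b x y else 0)
  rw [h1, SS_diag1 n (fun a b x y => f x y a b)]
  exact Nat.sum_divisorsAntidiagonal' (f := fun d e => ∑ l ∈ Ico 1 e, f l (e - l) d d) |>.trans
    (Nat.sum_divisorsAntidiagonal (f := fun d e => ∑ l ∈ Ico 1 d, f l (d - l) e e)).symm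

lemma liouville (n : ℕ) (F : ℤ → ℤ) (hF : ∀ x, F (-x) = F x) (h0 : F 0 = 0) :
    ∑ p ∈ SS n, (F ((p.1 : ℤ) - p.2.1) - F ((p.1 : ℤ) + p.2.1)) =
    ∑ q ∈ n.divisorsAntidiagonal, (2 * ((∑ l ∈ Ico 1 q.2, F q.1) - ∑ l ∈ Ico 1 q.1, F l)
      - ∑ l ∈ Ico 1 q.1, F q.1) := by
  have e1 := SS_tri1 n (fun a b x y => F ((a : ℤ) - b))
  have e2 := SS_tri2 n (fun a b x y => F ((a : ℤ) + b))
  have e3 := SS_sub1 n (fun a b x y => F ((a : ℤ) - b))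
  have e4 := SS_sub1 n (fun a b x y => F (a : ℤ))
  -- fixed `a`: split by `b` versus `a` and by `x` versus `y`
  have e5 := SS_tri1 n (fun a b x y => F (a : ℤ))
  have e6 := SS_tri2 n (fun a b x y => F (a : ℤ))
  have e7 := SS_sub1 n (fun a b x y => F (b : ℤ))
  have d1 := SS_diag1 n (fun a b x y => F (a : ℤ))
  have d2 := SS_diag2 n (fun a b x y => F (a : ℤ))
  have d3 := SS_diag2 n (fun a b x y => F ((a : ℤ) + b))
  have d4 : ∑ q ∈ n.divisorsAntidiagonal, ∑ l ∈ Ico 1 q.1, F ((l : ℤ) + (q.1 - l : ℕ)) =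
      ∑ q ∈ n.divisorsAntidiagonal, ∑ l ∈ Ico 1 q.1, F q.1 := by
    refine sum_congr rfl fun q _ => sum_congr rfl fun l hl => ?_
    rw [mem_Ico] at hl
    congr 1
    omega
  have s1 : ∑ p ∈ SS n with p.2.1 < p.1, F ((p.2.1 : ℤ) - p.1) =
      ∑ p ∈ SS n with p.2.1 < p.1, F ((p.1 : ℤ) - p.2.1) :=
    sum_congr rfl fun p _ => by rw [← hF]; congr 1; ring
  have s2 : ∑ p ∈ SS n with p.2.2.1 < p.2.2.2, F ((p.2.1 : ℤ) + p.1) =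
      ∑ p ∈ SS n with p.2.2.1 < p.2.2.2, F ((p.1 : ℤ) + p.2.1) :=
    sum_congr rfl fun p _ => by congr 1; ring
  have s3 : ∑ p ∈ SS n with p.1 = p.2.1, F ((p.1 : ℤ) - p.2.1) = 0 :=
    sum_eq_zero fun p hp => by rw [mem_filter] at hp; rw [hp.2, sub_self, h0]
  simp only [Nat.cast_add, add_sub_cancel_right] at e3 e4
  simp only [sum_sub_distrib, ← mul_sum]
  linarith

def sg (j n : ℕ) : ℤ := ∑ d ∈ n.divisors, (d : ℤ) ^ j

lemma sg_fst (j n : ℕ) : ∑ q ∈ n.divisorsAntidiagonal, (q.1 : ℤ) ^ j = sg j n :=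
  Nat.sum_divisorsAntidiagonal (f := fun d _ => (d : ℤ) ^ j)

lemma sg_fst' (j n : ℕ) : ∑ q ∈ n.divisorsAntidiagonal, (q.2 : ℤ) * (q.1 : ℤ) ^ (j + 1) = n * sg j n := by
  rw [← sg_fst, mul_sum]
  refine sum_congr rfl fun q hq => ?_
  rw [Nat.mem_divisorsAntidiagonal] at hq
  rw [← hq.1]; push_cast; ring

lemma SS_conv (n : ℕ) (i j : ℕ) : ∑ p ∈ SS n, (p.1 : ℤ) ^ i * (p.2.1 : ℤ) ^ j =
    ∑ k ∈ antidiagonal n, sg i k.1 * sg j k.2 := by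
  simp only [← sg_fst, sum_mul_sum]
  simp only [← sum_product', sum_sigma']
  refine sum_nbij' (fun p => ⟨(p.1 * p.2.2.1, p.2.1 * p.2.2.2), ((p.1, p.2.2.1), (p.2.1, p.2.2.2))⟩)
    (fun s => (s.2.1.1, s.2.2.1, s.2.1.2, s.2.2.2)) ?_ ?_ ?_ ?_ ?_
  · rintro ⟨a, b, x, y⟩ h
    simp only [mem_SS, mem_sigma, mem_product, HasAntidiagonal.mem_antidiagonal, Nat.mem_divisorsAntidiagonal] at *
    refine ⟨h.2.2.2.2, ⟨trivial, ?_⟩, trivial, ?_⟩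
    · exact (Nat.mul_pos h.1 h.2.2.1).ne'
    · exact (Nat.mul_pos h.2.1 h.2.2.2.1).ne'
  · rintro ⟨⟨k, l⟩, ⟨a, x⟩, ⟨b, y⟩⟩ h
    simp only [mem_SS, mem_sigma, mem_product, HasAntidiagonal.mem_antidiagonal, Nat.mem_divisorsAntidiagonal] at *
    obtain ⟨h1, ⟨rfl, h2⟩, rfl, h3⟩ := h
    simp only [ne_eq, mul_eq_zero, not_or] at h2 h3
    exact ⟨by omega, by omega, by omega, by omega, h1⟩
  · rintro ⟨a, b, x, y⟩ h
    rfl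
  · rintro ⟨⟨k, l⟩, ⟨a, x⟩, ⟨b, y⟩⟩ h
    simp only [mem_sigma, mem_product, HasAntidiagonal.mem_antidiagonal, Nat.mem_divisorsAntidiagonal] at *
    obtain ⟨h1, ⟨rfl, h2⟩, rfl, h3⟩ := h
    rfl
  · rintro ⟨a, b, x, y⟩ h
    rfl

lemma pow_sum2 (d : ℕ) : 6 * ∑ l ∈ Ico 1 (d + 1), (l : ℤ) ^ 2 = d * (d + 1) * (2 * d + 1) := by
  induction d with
  | zero => simp
  | succ d ih => rw [sum_Ico_succ_top (by omega), mul_add, ih]; push_cast; ring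

lemma pow_sum4 (d : ℕ) : 30 * ∑ l ∈ Ico 1 (d + 1), (l : ℤ) ^ 4 =
    d * (d + 1) * (2 * d + 1) * (3 * d ^ 2 + 3 * d - 1) := by
  induction d with
  | zero => simp
  | succ d ih => rw [sum_Ico_succ_top (by omega), mul_add, ih]; push_cast; ring

lemma conv11 (n : ℕ) : 12 * ∑ k ∈ antidiagonal n, sg 1 k.1 * sg 1 k.2 =
    5 * sg 3 n + sg 1 n - 6 * n * sg 1 n := by
  have h := liouville n (fun x => x ^ 2) (by intro x; ring) (by norm_num)
  have h1 : ∑ p ∈ SS n, (((p.1 : ℤ) - p.2.1) ^ 2 - ((p.1 : ℤ) + p.2.1) ^ 2) =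
      (-4) * ∑ p ∈ SS n, (p.1 : ℤ) ^ 1 * (p.2.1 : ℤ) ^ 1 := by
    rw [mul_sum]; exact sum_congr rfl fun p _ => by ring
  rw [SS_conv] at h1
  have h2 : 3 * ∑ q ∈ n.divisorsAntidiagonal, (2 * ((∑ l ∈ Ico 1 q.2, (q.1 : ℤ) ^ 2) -
      ∑ l ∈ Ico 1 q.1, (l : ℤ) ^ 2) - ∑ l ∈ Ico 1 q.1, (q.1 : ℤ) ^ 2) =
      6 * ∑ q ∈ n.divisorsAntidiagonal, (q.2 : ℤ) * (q.1 : ℤ) ^ (1 + 1) -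
      5 * ∑ q ∈ n.divisorsAntidiagonal, (q.1 : ℤ) ^ 3 -
      ∑ q ∈ n.divisorsAntidiagonal, (q.1 : ℤ) ^ 1 := by
    simp only [mul_sum, ← sum_sub_distrib]
    refine sum_congr rfl fun q hq => ?_
    obtain ⟨d, e⟩ := q
    rw [Nat.mem_divisorsAntidiagonal] at hq
    obtain ⟨h1, h2⟩ := hq
    rcases d with _ | d
    · simp at h1; omega
    rcases e with _ | e
    · simp at h1; omega
    have := pow_sum2 d
    simp only [sum_const, Nat.card_Ico, nsmul_eq_mul, Nat.add_sub_cancel] at *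
    push_cast at *
    linear_combination (-1) * this
  rw [sg_fst, sg_fst, sg_fst'] at h2
  linarith

lemma conv13 (n : ℕ) : 240 * ∑ k ∈ antidiagonal n, sg 1 k.1 * sg 3 k.2 =
    21 * sg 5 n + 10 * sg 3 n - 30 * n * sg 3 n - sg 1 n := by
  have h := liouville n (fun x => x ^ 4) (by intro x; ring) (by norm_num)
  have h1 : ∑ p ∈ SS n, (((p.1 : ℤ) - p.2.1) ^ 4 - ((p.1 : ℤ) + p.2.1) ^ 4) =
      (-8) * ∑ p ∈ SS n, (p.1 : ℤ) ^ 1 * (p.2.1 : ℤ) ^ 3 +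
      (-8) * ∑ p ∈ SS n, (p.2.1 : ℤ) ^ 1 * (p.1 : ℤ) ^ 3 := by
    rw [mul_sum, mul_sum, ← sum_add_distrib]; exact sum_congr rfl fun p _ => by ring
  rw [← SS_swap n (fun a b x y => (a : ℤ) ^ 1 * (b : ℤ) ^ 3), SS_conv] at h1
  have h2 : 15 * ∑ q ∈ n.divisorsAntidiagonal, (2 * ((∑ l ∈ Ico 1 q.2, (q.1 : ℤ) ^ 4) -
      ∑ l ∈ Ico 1 q.1, (l : ℤ) ^ 4) - ∑ l ∈ Ico 1 q.1, (q.1 : ℤ) ^ 4) =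
      30 * ∑ q ∈ n.divisorsAntidiagonal, (q.2 : ℤ) * (q.1 : ℤ) ^ (3 + 1) -
      21 * ∑ q ∈ n.divisorsAntidiagonal, (q.1 : ℤ) ^ 5 -
      10 * ∑ q ∈ n.divisorsAntidiagonal, (q.1 : ℤ) ^ 3 +
      ∑ q ∈ n.divisorsAntidiagonal, (q.1 : ℤ) ^ 1 := by
    simp only [mul_sum, ← sum_sub_distrib, ← sum_add_distrib]
    refine sum_congr rfl fun q hq => ?_
    obtain ⟨d, e⟩ := q
    rw [Nat.mem_divisorsAntidiagonal] at hq
    obtain ⟨h1, h2⟩ := hq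
    rcases d with _ | d
    · simp at h1; omega
    rcases e with _ | e
    · simp at h1; omega
    have := pow_sum4 d
    simp only [sum_const, Nat.card_Ico, nsmul_eq_mul, Nat.add_sub_cancel] at *
    push_cast at *
    linear_combination (-1) * this
  rw [sg_fst, sg_fst, sg_fst, sg_fst'] at h2
  linarith

def TT (n : ℕ) : Finset (ℕ × ℕ × ℕ × ℕ × ℕ × ℕ) :=
  ((Icc 1 n) ×ˢ (Icc 1 n) ×ˢ (Icc 1 n) ×ˢ (Icc 1 n) ×ˢ (Icc 1 n) ×ˢ (Icc 1 n)).filter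
    (fun p => p.1 * p.2.2.2.1 + p.2.1 * p.2.2.2.2.1 + p.2.2.1 * p.2.2.2.2.2 = n)

lemma mem_TT (n a b c x y z : ℕ) : (a, b, c, x, y, z) ∈ TT n ↔
    0 < a ∧ 0 < b ∧ 0 < c ∧ 0 < x ∧ 0 < y ∧ 0 < z ∧ a * x + b * y + c * z = n := by
  simp only [TT, mem_filter, mem_product, mem_Icc]
  constructor
  · rintro ⟨⟨h1, h2, h3, h4, h6, h7⟩, h5⟩
    exact ⟨h1.1, h2.1, h3.1, h4.1, h6.1, h7.1, h5⟩
  · rintro ⟨h1, h2, h3, h4, h6, h7, h5⟩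
    have := Nat.le_mul_of_pos_right a h4
    have := Nat.le_mul_of_pos_left x h1
    have := Nat.le_mul_of_pos_right b h6
    have := Nat.le_mul_of_pos_left y h2
    have := Nat.le_mul_of_pos_right c h7
    have := Nat.le_mul_of_pos_left z h3
    refine ⟨⟨⟨h1, ?_⟩, ⟨h2, ?_⟩, ⟨h3, ?_⟩, ⟨h4, ?_⟩, ⟨h6, ?_⟩, ⟨h7, ?_⟩⟩, h5⟩ <;> omega

/-- sum over `TT` of `abc` on the region `P` of `(x,y,z)` -/
def WW (n : ℕ) (P : ℕ → ℕ → ℕ → ℤ) : ℤ :=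
  ∑ p ∈ TT n, (p.1 : ℤ) * p.2.1 * p.2.2.1 * P p.2.2.2.1 p.2.2.2.2.1 p.2.2.2.2.2

lemma WW_swap12 (n : ℕ) (P : ℕ → ℕ → ℕ → ℤ) : WW n P = WW n (fun x y z => P y x z) := by
  refine sum_nbij' (fun p => (p.2.1, p.1, p.2.2.1, p.2.2.2.2.1, p.2.2.2.1, p.2.2.2.2.2))
    (fun p => (p.2.1, p.1, p.2.2.1, p.2.2.2.2.1, p.2.2.2.1, p.2.2.2.2.2)) ?_ ?_ ?_ ?_ ?_
  · rintro ⟨a, b, c, x, y, z⟩ h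
    rw [mem_TT] at *
    exact ⟨h.2.1, h.1, h.2.2.1, h.2.2.2.2.1, h.2.2.2.1, h.2.2.2.2.2.1, by linarith [h.2.2.2.2.2.2]⟩
  · rintro ⟨a, b, c, x, y, z⟩ h
    rw [mem_TT] at *
    exact ⟨h.2.1, h.1, h.2.2.1, h.2.2.2.2.1, h.2.2.2.1, h.2.2.2.2.2.1, by linarith [h.2.2.2.2.2.2]⟩
  · intro p _; rfl
  · intro p _; rfl
  · intro p _; ring

lemma WW_swap23 (n : ℕ) (P : ℕ → ℕ → ℕ → ℤ) : WW n P = WW n (fun x y z => P x z y) := by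
  refine sum_nbij' (fun p => (p.1, p.2.2.1, p.2.1, p.2.2.2.1, p.2.2.2.2.2, p.2.2.2.2.1))
    (fun p => (p.1, p.2.2.1, p.2.1, p.2.2.2.1, p.2.2.2.2.2, p.2.2.2.2.1)) ?_ ?_ ?_ ?_ ?_
  · rintro ⟨a, b, c, x, y, z⟩ h
    rw [mem_TT] at *
    exact ⟨h.1, h.2.2.1, h.2.1, h.2.2.2.1, h.2.2.2.2.2.1, h.2.2.2.2.1, by linarith [h.2.2.2.2.2.2]⟩
  · rintro ⟨a, b, c, x, y, z⟩ h
    rw [mem_TT] at *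
    exact ⟨h.1, h.2.2.1, h.2.1, h.2.2.2.1, h.2.2.2.2.2.1, h.2.2.2.2.1, by linarith [h.2.2.2.2.2.2]⟩
  · intro p _; rfl
  · intro p _; rfl
  · intro p _; ring

lemma WW_split (n : ℕ) : WW n (fun _ _ _ => 1) =
    6 * WW n (fun x y z => if x < y ∧ y < z then 1 else 0) +
    3 * WW n (fun x y z => if x = y then 1 else 0) -
    2 * WW n (fun x y z => if x = y ∧ y = z then 1 else 0) := by
  have a1 := WW_swap12 n (fun x y z => if x < y ∧ y < z then 1 else 0)
  have a2 := WW_swap23 n (fun x y z => if x < y ∧ y < z then 1 else 0)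
  have a3 := WW_swap23 n (fun x y z => if y < x ∧ x < z then 1 else 0)
  have a4 := WW_swap12 n (fun x y z => if x < z ∧ z < y then 1 else 0)
  have a5 := WW_swap12 n (fun x y z => if z < x ∧ x < y then 1 else 0)
  have b1 := WW_swap23 n (fun x y z => if x = y then 1 else 0)
  have b2 := WW_swap12 n (fun x y z => if x = z then 1 else 0)
  have key : WW n (fun _ _ _ => 1) =
      WW n (fun x y z => if x < y ∧ y < z then 1 else 0) +
      WW n (fun x y z => if y < x ∧ x < z then 1 else 0) +
      WW n (fun x y z => if x < z ∧ z < y then 1 else 0) +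
      WW n (fun x y z => if z < x ∧ x < y then 1 else 0) +
      WW n (fun x y z => if y < z ∧ z < x then 1 else 0) +
      WW n (fun x y z => if z < y ∧ y < x then 1 else 0) +
      WW n (fun x y z => if x = y then 1 else 0) +
      WW n (fun x y z => if x = z then 1 else 0) +
      WW n (fun x y z => if y = z then 1 else 0) -
      2 * WW n (fun x y z => if x = y ∧ y = z then 1 else 0) := by
    simp only [WW, mul_sum, ← sum_add_distrib, ← sum_sub_distrib]
    refine sum_congr rfl ?_
    rintro ⟨a, b, c, x, y, z⟩ _
    simp only
    have : (1 : ℤ) = (if x < y ∧ y < z then 1 else 0) + (if y < x ∧ x < z then 1 else 0) +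
      (if x < z ∧ z < y then 1 else 0) + (if z < x ∧ x < y then 1 else 0) +
      (if y < z ∧ z < x then 1 else 0) + (if z < y ∧ y < x then 1 else 0) +
      (if x = y then 1 else 0) + (if x = z then 1 else 0) + (if y = z then 1 else 0) -
      2 * (if x = y ∧ y = z then 1 else 0) := by
      split_ifs <;> omega
    linear_combination (a * b * c : ℤ) * this
  linarith

lemma WW_conv (n : ℕ) (P : ℕ → ℕ → ℤ) : WW n (fun x y _ => P x y) =
    ∑ k ∈ antidiagonal n, sg 1 k.1 *
      ∑ p ∈ SS k.2, (p.1 : ℤ) * p.2.1 * P p.2.2.1 p.2.2.2 := by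
  simp only [← sg_fst, sum_mul_sum]
  simp only [← sum_product', sum_sigma']
  refine sum_nbij' (fun p => ⟨(p.2.2.1 * p.2.2.2.2.2, p.1 * p.2.2.2.1 + p.2.1 * p.2.2.2.2.1),
      ((p.2.2.1, p.2.2.2.2.2), (p.1, p.2.1, p.2.2.2.1, p.2.2.2.2.1))⟩)
    (fun s => (s.2.2.1, s.2.2.2.1, s.2.1.1, s.2.2.2.2.1, s.2.2.2.2.2, s.2.1.2)) ?_ ?_ ?_ ?_ ?_
  · rintro ⟨a, b, c, x, y, z⟩ h
    simp only [mem_TT, mem_SS, mem_sigma, mem_product, HasAntidiagonal.mem_antidiagonal,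
      Nat.mem_divisorsAntidiagonal] at *
    obtain ⟨h1, h2, h3, h4, h5, h6, h7⟩ := h
    exact ⟨by omega, ⟨trivial, (Nat.mul_pos h3 h6).ne'⟩, h1, h2, h4, h5, trivial⟩
  · rintro ⟨⟨k, l⟩, ⟨c, z⟩, ⟨a, b, x, y⟩⟩ h
    simp only [mem_TT, mem_SS, mem_sigma, mem_product, HasAntidiagonal.mem_antidiagonal,
      Nat.mem_divisorsAntidiagonal] at *
    obtain ⟨h1, ⟨rfl, h2⟩, g1, g2, g3, g4, rfl⟩ := h
    simp only [ne_eq, mul_eq_zero, not_or] at h2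
    exact ⟨by omega, by omega, by omega, by omega, by omega, by omega, by omega⟩
  · rintro ⟨a, b, c, x, y, z⟩ h
    rfl
  · rintro ⟨⟨k, l⟩, ⟨c, z⟩, ⟨a, b, x, y⟩⟩ h
    simp only [mem_SS, mem_sigma, mem_product, Nat.mem_divisorsAntidiagonal] at *
    obtain ⟨h1, ⟨rfl, h2⟩, g1, g2, g3, g4, rfl⟩ := h
    rfl
  · rintro ⟨a, b, c, x, y, z⟩ h
    ring

lemma sum_jl (d : ℕ) (e : ℤ) : 6 * ∑ l ∈ Ico 1 (d + 1), (l : ℤ) * (e - l) =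
    3 * e * d * (d + 1) - d * (d + 1) * (2 * d + 1) := by
  induction d with
  | zero => simp
  | succ d ih => rw [sum_Ico_succ_top (by omega), mul_add, ih]; push_cast; ring

lemma sum_jl' (l : ℕ) : 6 * ∑ j ∈ Ico 1 l, (j : ℤ) * ((l - j : ℕ) : ℤ) = (l : ℤ) ^ 3 - l := by
  have : ∑ j ∈ Ico 1 l, (j : ℤ) * ((l - j : ℕ) : ℤ) = ∑ j ∈ Ico 1 l, (j : ℤ) * ((l : ℤ) - j) := by
    refine sum_congr rfl fun j hj => ?_
    rw [mem_Ico] at hj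
    rw [Nat.cast_sub hj.2.le]
  rw [this]
  rcases l with _ | d
  · simp
  · rw [sum_jl]; push_cast; ring

lemma sum_l3 (d : ℕ) (e : ℤ) : 60 * ∑ l ∈ Ico 1 (d + 1), ((l : ℤ) ^ 3 - l) * (e - l) =
    e * (15 * d ^ 2 * (d + 1) ^ 2 - 30 * d * (d + 1)) -
    2 * (d * (d + 1) * (2 * d + 1) * (3 * d ^ 2 + 3 * d - 1)) + 10 * d * (d + 1) * (2 * d + 1) := by
  induction d with
  | zero => simp
  | succ d ih => rw [sum_Ico_succ_top (by omega), mul_add, ih]; push_cast; ring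

lemma sum_l3' (d : ℕ) : 20 * ∑ l ∈ Ico 1 d, ((l : ℤ) ^ 3 - l) * ((d - l : ℕ) : ℤ) =
    (d : ℤ) ^ 5 - 5 * d ^ 3 + 4 * d := by
  have : ∑ l ∈ Ico 1 d, ((l : ℤ) ^ 3 - l) * ((d - l : ℕ) : ℤ) =
      ∑ l ∈ Ico 1 d, ((l : ℤ) ^ 3 - l) * ((d : ℤ) - l) := by
    refine sum_congr rfl fun j hj => ?_
    rw [mem_Ico] at hj
    rw [Nat.cast_sub hj.2.le]
  rw [this]
  rcases d with _ | d
  · simp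
  · have := sum_l3 d ((d + 1 : ℕ) : ℤ)
    push_cast at *
    linarith

lemma diagP2 (n : ℕ) : 6 * ∑ p ∈ SS n, (p.1 : ℤ) * p.2.1 * (if p.2.2.1 = p.2.2.2 then 1 else 0) =
    sg 3 n - sg 1 n := by
  simp only [mul_ite, mul_one, mul_zero]
  rw [← sum_filter, SS_diag2 n (fun a b _ _ => (a : ℤ) * b), ← sg_fst, ← sg_fst, mul_sum,
    ← sum_sub_distrib]
  exact sum_congr rfl fun q _ => by rw [sum_jl', pow_one]

lemma diagP3 (n : ℕ) : 120 * WW n (fun x y z => if x = y ∧ y = z then 1 else 0) =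
    sg 5 n - 5 * sg 3 n + 4 * sg 1 n := by
  have h : WW n (fun x y z => if x = y ∧ y = z then 1 else 0) =
      ∑ q ∈ n.divisorsAntidiagonal, ∑ l ∈ Ico 1 q.1, ∑ j ∈ Ico 1 l,
        (j : ℤ) * ((l - j : ℕ) : ℤ) * ((q.1 - l : ℕ) : ℤ) := by
    simp only [WW, mul_ite, mul_one, mul_zero]
    rw [← sum_filter, sum_sigma', sum_sigma']
    refine sum_nbij' (fun p => ⟨⟨(p.1 + p.2.1 + p.2.2.1, p.2.2.2.1), p.1 + p.2.1⟩, p.1⟩)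
      (fun s => (s.2, s.1.2 - s.2, s.1.1.1 - s.1.2, s.1.1.2, s.1.1.2, s.1.1.2)) ?_ ?_ ?_ ?_ ?_
    · rintro ⟨a, b, c, x, y, z⟩ h
      simp only [mem_filter, mem_TT, mem_sigma, Nat.mem_divisorsAntidiagonal, mem_Ico] at *
      obtain ⟨⟨h1, h2, h3, h4, h5, h6, h7⟩, rfl, rfl⟩ := h
      have := Nat.mul_pos h1 h4
      exact ⟨⟨⟨by rw [← h7]; ring, by omega⟩, by omega, by omega⟩, by omega, by omega⟩
    · rintro ⟨⟨⟨d, e⟩, l⟩, j⟩ h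
      simp only [mem_filter, mem_TT, mem_sigma, Nat.mem_divisorsAntidiagonal, mem_Ico] at *
      obtain ⟨⟨⟨h1, h2⟩, h3, h4⟩, h5, h6⟩ := h
      have : 0 < e := Nat.pos_of_ne_zero (by rintro rfl; simp at h1; omega)
      refine ⟨⟨by omega, by omega, by omega, by omega, by omega, by omega, ?_⟩, trivial, trivial⟩
      rw [← h1, ← add_mul, ← add_mul]
      congr 1
      omega
    · rintro ⟨a, b, c, x, y, z⟩ h
      simp only [mem_filter, mem_TT] at *
      obtain ⟨h1, rfl, rfl⟩ := h
      simp
    · rintro ⟨⟨⟨d, e⟩, l⟩, j⟩ h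
      simp only [mem_sigma, Nat.mem_divisorsAntidiagonal, mem_Ico] at *
      have e1 : j + (l - j) = l := by omega
      have e2 : l + (d - l) = d := by omega
      simp [e1, e2]
    · rintro ⟨a, b, c, x, y, z⟩ h
      simp
  rw [h, ← sg_fst, ← sg_fst, ← sg_fst, mul_sum, mul_sum, mul_sum, ← sum_sub_distrib,
    ← sum_add_distrib]
  refine sum_congr rfl fun q _ => ?_
  rw [pow_one, ← sum_l3', show (120 : ℤ) = 20 * 6 by norm_num, mul_assoc, mul_sum (a := (6 : ℤ))]
  congr 1
  refine sum_congr rfl fun l _ => ?_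
  rw [← sum_mul, ← mul_assoc, sum_jl']

lemma M1_eq (n : ℕ) : (MacMahonM 1 n : ℤ) = sg 1 n := by
  rw [MacMahonM, ← sg_fst]
  push_cast
  refine sum_nbij' (fun p => (p.1 0, p.2 0)) (fun q => (![q.1], ![q.2])) ?_ ?_ ?_ ?_ ?_
  · rintro ⟨m, s⟩ h
    simp only [mem_filter, mem_product, Fintype.mem_piFinset, mem_Icc,
      Nat.mem_divisorsAntidiagonal, Fin.sum_univ_one] at *
    have := h.1.1 0
    exact ⟨h.2.2, by omega⟩
  · rintro ⟨d, e⟩ h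
    simp only [mem_filter, mem_product, Fintype.mem_piFinset, mem_Icc,
      Nat.mem_divisorsAntidiagonal, Fin.sum_univ_one] at *
    obtain ⟨rfl, h2⟩ := h
    simp only [ne_eq, mul_eq_zero, not_or] at h2
    have := Nat.le_mul_of_pos_right d (Nat.pos_of_ne_zero h2.2)
    have := Nat.le_mul_of_pos_left e (Nat.pos_of_ne_zero h2.1)
    simp [Fin.forall_fin_one]
    omega
  · rintro ⟨m, s⟩ h
    ext i <;> fin_cases i <;> rfl
  · rintro ⟨d, e⟩ h
    rfl
  · rintro ⟨m, s⟩ h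
    simp

lemma M2_eq (n : ℕ) : (MacMahonM 2 n : ℤ) = ∑ p ∈ SS n with p.2.2.1 < p.2.2.2, (p.1 : ℤ) * p.2.1 := by
  rw [MacMahonM]
  push_cast
  refine sum_nbij' (fun p => (p.1 0, p.1 1, p.2 0, p.2 1))
    (fun q => (![q.1, q.2.1], ![q.2.2.1, q.2.2.2])) ?_ ?_ ?_ ?_ ?_
  · rintro ⟨m, s⟩ h
    simp only [mem_filter, mem_product, Fintype.mem_piFinset, mem_Icc, mem_SS,
      Fin.sum_univ_two] at *
    exact ⟨⟨(h.1.1 0).1, (h.1.1 1).1, (h.1.2 0).1, (h.1.2 1).1, h.2.2⟩, h.2.1 0 1 (by decide)⟩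
  · rintro ⟨a, b, x, y⟩ h
    have h' := h
    simp only [mem_filter, SS, mem_product, mem_Icc] at h'
    simp only [mem_filter, mem_product, Fintype.mem_piFinset, mem_Icc, mem_SS,
      Fin.sum_univ_two] at *
    simp [Fin.forall_fin_two]
    omega
  · rintro ⟨m, s⟩ h
    ext i <;> fin_cases i <;> rfl
  · rintro ⟨a, b, x, y⟩ h
    rfl
  · rintro ⟨m, s⟩ h
    simp [Fin.prod_univ_two]

lemma M3_eq (n : ℕ) : (MacMahonM 3 n : ℤ) = WW n (fun x y z => if x < y ∧ y < z then 1 else 0) := by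
  rw [MacMahonM]
  simp only [WW, mul_ite, mul_one, mul_zero]
  rw [← sum_filter]
  push_cast
  refine sum_nbij' (fun p => (p.1 0, p.1 1, p.1 2, p.2 0, p.2 1, p.2 2))
    (fun q => (![q.1, q.2.1, q.2.2.1], ![q.2.2.2.1, q.2.2.2.2.1, q.2.2.2.2.2])) ?_ ?_ ?_ ?_ ?_
  · rintro ⟨m, s⟩ h
    simp only [mem_filter, mem_product, Fintype.mem_piFinset, mem_Icc, mem_TT,
      Fin.sum_univ_three] at *
    exact ⟨⟨(h.1.1 0).1, (h.1.1 1).1, (h.1.1 2).1, (h.1.2 0).1, (h.1.2 1).1, (h.1.2 2).1, h.2.2⟩,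
      h.2.1 0 1 (by decide), h.2.1 1 2 (by decide)⟩
  · rintro ⟨a, b, c, x, y, z⟩ h
    have h' := h
    simp only [mem_filter, TT, mem_product, mem_Icc] at h'
    simp only [mem_filter, mem_product, Fintype.mem_piFinset, mem_Icc, mem_TT,
      Fin.sum_univ_three] at *
    obtain ⟨⟨h1, h2, h3, h4, h5, h6, h7⟩, h8, h9⟩ := h
    refine ⟨⟨?_, ?_⟩, ?_, by simpa using h7⟩
    · intro i; fin_cases i <;> simp <;> omega
    · intro i; fin_cases i <;> simp <;> omega
    · intro i j hij
      fin_cases i <;> fin_cases j <;> simp at hij ⊢ <;> omega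
  · rintro ⟨m, s⟩ h
    ext i <;> fin_cases i <;> rfl
  · rintro ⟨a, b, c, x, y, z⟩ h
    rfl
  · rintro ⟨m, s⟩ h
    simp [Fin.prod_univ_three]

lemma M2_formula (n : ℕ) : 8 * (MacMahonM 2 n : ℤ) = (1 - 2 * n) * sg 1 n + sg 3 n := by
  have h := SS_tri2 n (fun a b _ _ => (a : ℤ) * b)
  have h1 := diagP2 n
  simp only [mul_ite, mul_one, mul_zero] at h1
  rw [← sum_filter] at h1
  have h2 := conv11 n
  rw [← SS_conv] at h2
  simp only [pow_one] at h2
  have h3 : ∑ p ∈ SS n with p.2.2.1 < p.2.2.2, (p.2.1 : ℤ) * p.1 =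
      ∑ p ∈ SS n with p.2.2.1 < p.2.2.2, (p.1 : ℤ) * p.2.1 :=
    sum_congr rfl fun p _ => mul_comm _ _
  rw [M2_eq]
  linarith

lemma M3_formula (n : ℕ) : 1920 * (MacMahonM 3 n : ℤ) =
    (40 * n ^ 2 - 100 * n + 37) * sg 1 n - (30 * n - 50) * sg 3 n + 3 * sg 5 n := by
  have h := WW_split n
  have h1 := diagP3 n
  have h2 := conv11 n
  have h3 := conv13 n
  have w1 : 12 * WW n (fun _ _ _ => 1) = 5 * (∑ k ∈ antidiagonal n, sg 1 k.1 * sg 3 k.2) +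
      (∑ k ∈ antidiagonal n, sg 1 k.1 * sg 1 k.2) -
      6 * ∑ k ∈ antidiagonal n, k.2 * (sg 1 k.1 * sg 1 k.2) := by
    rw [WW_conv n (fun _ _ => 1)]
    simp only [mul_sum (s := antidiagonal n), ← sum_add_distrib, ← sum_sub_distrib]
    refine sum_congr rfl fun k _ => ?_
    have e := conv11 k.2
    rw [← SS_conv] at e
    simp only [pow_one, mul_one] at *
    linear_combination sg 1 k.1 * e
  have w2 : 6 * WW n (fun x y _ => if x = y then 1 else 0) =
      (∑ k ∈ antidiagonal n, sg 1 k.1 * sg 3 k.2) -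
      (∑ k ∈ antidiagonal n, sg 1 k.1 * sg 1 k.2) := by
    rw [WW_conv n (fun x y => if x = y then 1 else 0)]
    rw [mul_sum (s := antidiagonal n), ← sum_sub_distrib]
    refine sum_congr rfl fun k _ => ?_
    linear_combination sg 1 k.1 * diagP2 k.2
  have w3 : 2 * ∑ k ∈ antidiagonal n, (k.2 : ℤ) * (sg 1 k.1 * sg 1 k.2) =
      n * ∑ k ∈ antidiagonal n, sg 1 k.1 * sg 1 k.2 := by
    have s : ∑ k ∈ antidiagonal n, (k.2 : ℤ) * (sg 1 k.1 * sg 1 k.2) =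
        ∑ k ∈ antidiagonal n, (k.1 : ℤ) * (sg 1 k.2 * sg 1 k.1) :=
      (Finset.Nat.sum_antidiagonal_swap (f := fun k : ℕ × ℕ => (k.2 : ℤ) * (sg 1 k.1 * sg 1 k.2))).symm
    rw [two_mul]
    nth_rewrite 1 [s]
    rw [← sum_add_distrib, mul_sum]
    refine sum_congr rfl fun k hk => ?_
    rw [HasAntidiagonal.mem_antidiagonal] at hk
    rw [← hk]; push_cast; ring
  rw [M3_eq]
  generalize (∑ k ∈ antidiagonal n, (k.2 : ℤ) * (sg 1 k.1 * sg 1 k.2)) = H at *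
  generalize (∑ k ∈ antidiagonal n, sg 1 k.1 * sg 1 k.2) = C at *
  generalize (∑ k ∈ antidiagonal n, sg 1 k.1 * sg 3 k.2) = G at *
  have h2n : (n : ℤ) * (12 * C) = n * (5 * sg 3 n + sg 1 n - 6 * n * sg 1 n) := by rw [h2]
  linarith

theorem final_form (n : ℕ) :
    2 * ((3 * (n : ℤ) ^ 3 - 13 * n ^ 2 + 18 * n - 8) * MacMahonM 1 n +
        (12 * (n : ℤ) ^ 2 - 120 * n + 212) * MacMahonM 2 n - 960 * MacMahonM 3 n) =
    3 * ∑ d ∈ n.divisors, (d : ℤ) * (d ^ 2 - 1) * (n ^ 2 - d ^ 2) := by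
  have h : ∑ d ∈ n.divisors, (d : ℤ) * (d ^ 2 - 1) * (n ^ 2 - d ^ 2) =
      ((n : ℤ) ^ 2 + 1) * sg 3 n - n ^ 2 * sg 1 n - sg 5 n := by
    simp only [sg, mul_sum, ← sum_sub_distrib]
    exact sum_congr rfl fun d _ => by ring
  have h2 := M2_formula n
  have h3 := M3_formula n
  rw [h, M1_eq]
  linear_combination (3 * (n : ℤ) ^ 2 - 30 * n + 53) * h2 - h3

theorem prime_detect_M1_M2_M3 (n : ℕ) (hn : 2 ≤ n) :
    (3 * (n : ℤ) ^ 3 - 13 * n ^ 2 + 18 * n - 8) * MacMahonM 1 n +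
        (12 * (n : ℤ) ^ 2 - 120 * n + 212) * MacMahonM 2 n - 960 * MacMahonM 3 n ≥ 0 ∧
      ((3 * (n : ℤ) ^ 3 - 13 * n ^ 2 + 18 * n - 8) * MacMahonM 1 n +
          (12 * (n : ℤ) ^ 2 - 120 * n + 212) * MacMahonM 2 n - 960 * MacMahonM 3 n = 0 ↔
        n.Prime) := by
  have h := final_form n
  generalize (3 * (n : ℤ) ^ 3 - 13 * n ^ 2 + 18 * n - 8) * MacMahonM 1 n +
        (12 * (n : ℤ) ^ 2 - 120 * n + 212) * MacMahonM 2 n - 960 * MacMahonM 3 n = E at *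
  have hpos : ∀ d ∈ n.divisors, 0 ≤ (d : ℤ) * (d ^ 2 - 1) * (n ^ 2 - d ^ 2) := by
    intro d hd
    have h1 : (1 : ℤ) ≤ d := by exact_mod_cast Nat.pos_of_mem_divisors hd
    have h2 : (d : ℤ) ≤ n := by exact_mod_cast Nat.divisor_le hd
    refine mul_nonneg (mul_nonneg (by omega) (by nlinarith)) (by nlinarith)
  have hs := sum_nonneg hpos
  refine ⟨by linarith, ?_⟩
  have : E = 0 ↔ ∑ d ∈ n.divisors, (d : ℤ) * (d ^ 2 - 1) * (n ^ 2 - d ^ 2) = 0 := by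
    constructor <;> intro _ <;> linarith
  rw [this, sum_eq_zero_iff_of_nonneg hpos, Nat.prime_def]
  constructor
  · intro H
    refine ⟨hn, fun m hm => ?_⟩
    have hmem : m ∈ n.divisors := Nat.mem_divisors.2 ⟨hm, by omega⟩
    have h1 := Nat.pos_of_mem_divisors hmem
    have h2 := Nat.divisor_le hmem
    by_contra hc
    have a1 : (2 : ℤ) ≤ m := by exact_mod_cast (by omega : 2 ≤ m)
    have a2 : (m : ℤ) + 1 ≤ n := by exact_mod_cast (by omega : m + 1 ≤ n)
    have a3 : (0 : ℤ) < (m : ℤ) * (m ^ 2 - 1) * (n ^ 2 - m ^ 2) :=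
      mul_pos (mul_pos (by omega) (by nlinarith)) (by nlinarith)
    exact a3.ne' (H m hmem)
  · rintro ⟨_, H⟩ d hd
    rcases H d (Nat.dvd_of_mem_divisors hd) with rfl | rfl <;> simp
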